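/- Let Q be a symmetric positive semidefinite n×n real matrix, q ∈ ℝⁿ, A ∈ ℝ^{m×n}, b ∈ ℝᵐ, G ∈ ℝ^{p×n}, d ∈ ℝᵖ, and fix θ = (θ_x,θ_y,θ_z), δ = (δ_x,δ_y,δ_z) with δ_x,δ_y,δ_z > 0, and ν > 0. A point (x,s,y,z) with x ∈ ℝⁿ, s ∈ ℝ₊₊ᵖ, y ∈ ℝᵐ, z ∈ ℝᵖ is a global minimizer of M_δ(·,·,·,·;θ,ν) over ℝⁿ × ℝ₊₊ᵖ × ℝᵐ × ℝᵖ if and only if it satisfies the system: Qx + q + Aᵀy + Gᵀz + δ_x(x − θ_x) = 0; sᵢ zᵢ = ν for all i = 1,…,p; Ax − b + δ_y(θ_y − y) = 0; and Gx − d + s + δ_z(θ_z − z) = 0. -/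

import Mathlib

open Matrix

/-!
Write `e = Ax - b + δy (θy - y)`, `f = Gx - d + s + δz (θz - z)` and
`F = Qx + q + Aᵀy + Gᵀz + δx (x - θx)`. Since `θy + (Ax - b)/δy = y + e/δy`, and similarly for
`z`, the increment of `M` along a displacement `t • (hx, hs, hy, hz)` is exactly
`t * lin + t² * quad - ν ∑ (log (s + t hs) - log s)`, where
`lin = F ⬝ hx + (2/δy) e ⬝ A hx + (2/δz) f ⬝ (G hx + hs) + z ⬝ hs - e ⬝ hy - f ⬝ hz` and `quad ≥ 0`.

If the system holds, then `lin = z ⬝ hs = ∑ ν hsᵢ / sᵢ`, which dominates the logarithmic increment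
because `log r ≤ r - 1`; so the point is a minimizer. Conversely, at a minimizer and for `hs = 0`, a
polynomial `t * lin + t² * quad` is nonnegative for all `t`, so `lin = 0`; the directions `hy = e`,
`hz = f`, `hx = F` give `e = 0`, `f = 0`, `F = 0` in turn. Finally the first-order condition in a
single slack coordinate gives `zᵢ = ν / sᵢ`.
-/

/-- A quadratic polynomial without constant term that is nonnegative on `ℝ` has no linear term. -/
lemma linear_coeff_eq_zero {l k : ℝ} (h : ∀ t : ℝ, 0 ≤ t * l + t ^ 2 * k) : l = 0 := by
  have hmin : IsLocalMin (fun t : ℝ => t * l + t ^ 2 * k) 0 :=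
    Filter.Eventually.of_forall fun t => by simpa using h t
  have hd : HasDerivAt (fun t : ℝ => t * l + t ^ 2 * k) l 0 := by
    have := ((hasDerivAt_id (0 : ℝ)).mul_const l).add (((hasDerivAt_id (0 : ℝ)).pow 2).mul_const k)
    exact this.congr_deriv (by simp)
  exact hmin.hasDerivAt_eq_zero hd

/-- First-order condition for a quadratic perturbed by a logarithmic barrier. -/
lemma barrier_first_order {σ ζ κ ν : ℝ} (hσ : 0 < σ)
    (h : ∀ t : ℝ, 0 < σ + t → 0 ≤ t * ζ + t ^ 2 * κ - ν * (Real.log (σ + t) - Real.log σ)) :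
    σ * ζ = ν := by
  have hmin : IsLocalMin
      (fun t : ℝ => t * ζ + t ^ 2 * κ - ν * (Real.log (σ + t) - Real.log σ)) 0 := by
    filter_upwards [lt_mem_nhds (neg_lt_zero.mpr hσ)] with t ht
    simpa using h t (by linarith)
  have hd : HasDerivAt
      (fun t : ℝ => t * ζ + t ^ 2 * κ - ν * (Real.log (σ + t) - Real.log σ)) (ζ - ν * (1 / σ)) 0 := by
    have hlog : HasDerivAt (fun t : ℝ => Real.log (σ + t)) (1 / σ) 0 := by
      simpa using ((hasDerivAt_id (0 : ℝ)).const_add σ).log (by simpa using hσ.ne')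
    have := (((hasDerivAt_id (0 : ℝ)).mul_const ζ).add
      (((hasDerivAt_id (0 : ℝ)).pow 2).mul_const κ)).sub ((hlog.sub_const (Real.log σ)).const_mul ν)
    exact this.congr_deriv (by simp)
  have h0 := hmin.hasDerivAt_eq_zero hd
  field_simp at h0
  linarith

lemma dot_add_smul_self {ι : Type*} [Fintype ι] (u v : ι → ℝ) (t : ℝ) :
    (u + t • v) ⬝ᵥ (u + t • v) = u ⬝ᵥ u + 2 * t * (u ⬝ᵥ v) + t ^ 2 * (v ⬝ᵥ v) := by
  simp only [add_dotProduct, dotProduct_add, smul_dotProduct, dotProduct_smul, smul_eq_mul,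
    dotProduct_comm v u]
  ring

lemma dot_self_nonneg {ι : Type*} [Fintype ι] (u : ι → ℝ) : 0 ≤ u ⬝ᵥ u :=
  Finset.sum_nonneg fun i _ => mul_self_nonneg (u i)

/-- A point `(x,s,y,z)` with `s > 0` globally minimizes the primal-dual augmented
Lagrangian `M` over `ℝⁿ × ℝ₊₊ᵖ × ℝᵐ × ℝᵖ` iff it satisfies the regularized
interior-point optimality system. -/
theorem primal_dual_minimizer_iff_optimality_system
    (n m p : ℕ)
    (Q : Matrix (Fin n) (Fin n) ℝ) (hQ : Q.PosSemidef)
    (q : Fin n → ℝ)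
    (A : Matrix (Fin m) (Fin n) ℝ) (b : Fin m → ℝ)
    (G : Matrix (Fin p) (Fin n) ℝ) (d : Fin p → ℝ)
    (θx : Fin n → ℝ) (θy : Fin m → ℝ) (θz : Fin p → ℝ)
    (δx δy δz : ℝ) (hδx : 0 < δx) (hδy : 0 < δy) (hδz : 0 < δz)
    (ν : ℝ) (hν : 0 < ν)
    (L : (Fin n → ℝ) → (Fin p → ℝ) → ℝ)
    (hL : ∀ x s, L x s =
      (1 / 2) * (x ⬝ᵥ Q.mulVec x) + q ⬝ᵥ x
      + θy ⬝ᵥ (A.mulVec x - b)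
      + θz ⬝ᵥ (G.mulVec x - d + s)
      + (δx / 2) * ((x - θx) ⬝ᵥ (x - θx))
      + (1 / (2 * δy)) * ((A.mulVec x - b) ⬝ᵥ (A.mulVec x - b))
      + (1 / (2 * δz)) * ((G.mulVec x - d + s) ⬝ᵥ (G.mulVec x - d + s))
      - ν * ∑ i, Real.log (s i))
    (M : (Fin n → ℝ) → (Fin p → ℝ) → (Fin m → ℝ) → (Fin p → ℝ) → ℝ)
    (hM : ∀ x s y z, M x s y z =
      L x s
      + (1 / (2 * δy)) *
          ((A.mulVec x - b + δy • (θy - y)) ⬝ᵥ (A.mulVec x - b + δy • (θy - y)))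
      + (1 / (2 * δz)) *
          ((G.mulVec x - d + s + δz • (θz - z)) ⬝ᵥ (G.mulVec x - d + s + δz • (θz - z))))
    (x : Fin n → ℝ) (s : Fin p → ℝ) (hs : ∀ i, 0 < s i)
    (y : Fin m → ℝ) (z : Fin p → ℝ) :
    (∀ (x' : Fin n → ℝ) (s' : Fin p → ℝ) (y' : Fin m → ℝ) (z' : Fin p → ℝ),
        (∀ i, 0 < s' i) → M x s y z ≤ M x' s' y' z') ↔
    (Q.mulVec x + q + Aᵀ.mulVec y + Gᵀ.mulVec z + δx • (x - θx) = 0 ∧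
      (∀ i, s i * z i = ν) ∧
      A.mulVec x - b + δy • (θy - y) = 0 ∧
      G.mulVec x - d + s + δz • (θz - z) = 0) := by
  have hsymm : ∀ u v : Fin n → ℝ, u ⬝ᵥ Q.mulVec v = Q.mulVec u ⬝ᵥ v := by
    intro u v
    have hT : Qᵀ = Q := by simpa using hQ.isHermitian.eq
    rw [dotProduct_mulVec, ← mulVec_transpose, hT]
  have hQnn : ∀ u : Fin n → ℝ, 0 ≤ u ⬝ᵥ Q.mulVec u := by
    intro u
    simpa using hQ.dotProduct_mulVec_nonneg u
  set e : Fin m → ℝ := A.mulVec x - b + δy • (θy - y) with he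
  set f : Fin p → ℝ := G.mulVec x - d + s + δz • (θz - z) with hf
  set F : Fin n → ℝ := Q.mulVec x + q + Aᵀ.mulVec y + Gᵀ.mulVec z + δx • (x - θx) with hF
  -- The second-order part of the increment of `M`, barrier excluded.
  let quad : (Fin n → ℝ) → (Fin p → ℝ) → (Fin m → ℝ) → (Fin p → ℝ) → ℝ := fun hx k hy hz =>
    1 / 2 * (hx ⬝ᵥ Q.mulVec hx) + δx / 2 * (hx ⬝ᵥ hx)
      + 1 / (2 * δy) * (A.mulVec hx ⬝ᵥ A.mulVec hx)
      + 1 / (2 * δz) * ((G.mulVec hx + k) ⬝ᵥ (G.mulVec hx + k))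
      + 1 / (2 * δy) * ((A.mulVec hx - δy • hy) ⬝ᵥ (A.mulVec hx - δy • hy))
      + 1 / (2 * δz) * ((G.mulVec hx + k - δz • hz) ⬝ᵥ (G.mulVec hx + k - δz • hz))
  have hquad : ∀ hx k hy hz, 0 ≤ quad hx k hy hz := by
    intro hx k hy hz
    have h1 := hQnn hx
    have h2 := dot_self_nonneg hx
    have h3 := dot_self_nonneg (A.mulVec hx)
    have h4 := dot_self_nonneg (G.mulVec hx + k)
    have h5 := dot_self_nonneg (A.mulVec hx - δy • hy)
    have h6 := dot_self_nonneg (G.mulVec hx + k - δz • hz)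
    simp only [quad]
    positivity
  have key : ∀ (t : ℝ) (hx : Fin n → ℝ) (k : Fin p → ℝ) (hy : Fin m → ℝ) (hz : Fin p → ℝ),
      M (x + t • hx) (s + t • k) (y + t • hy) (z + t • hz) = M x s y z
        + t * (F ⬝ᵥ hx + 2 / δy * (e ⬝ᵥ A.mulVec hx) + 2 / δz * (f ⬝ᵥ (G.mulVec hx + k))
            + z ⬝ᵥ k - e ⬝ᵥ hy - f ⬝ᵥ hz)
        + t ^ 2 * quad hx k hy hz
        - ν * (∑ i, Real.log ((s + t • k) i) - ∑ i, Real.log (s i)) := by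
    intro t hx k hy hz
    have r1 : A.mulVec (x + t • hx) - b = (A.mulVec x - b) + t • A.mulVec hx := by
      rw [mulVec_add, mulVec_smul]; abel
    have r2 : G.mulVec (x + t • hx) - d + (s + t • k)
        = (G.mulVec x - d + s) + t • (G.mulVec hx + k) := by
      rw [mulVec_add, mulVec_smul, smul_add]; abel
    have r3 : (A.mulVec x - b) + t • A.mulVec hx + δy • (θy - (y + t • hy))
        = e + t • (A.mulVec hx - δy • hy) := by
      rw [he]; ext i; simp; ring
    have r4 : (G.mulVec x - d + s) + t • (G.mulVec hx + k) + δz • (θz - (z + t • hz))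
        = f + t • (G.mulVec hx + k - δz • hz) := by
      rw [hf]; ext i; simp; ring
    have r5 : x + t • hx - θx = (x - θx) + t • hx := by abel
    have r6 : (x + t • hx) ⬝ᵥ Q.mulVec (x + t • hx) = x ⬝ᵥ Q.mulVec x
        + 2 * t * (Q.mulVec x ⬝ᵥ hx) + t ^ 2 * (hx ⬝ᵥ Q.mulVec hx) := by
      simp only [mulVec_add, mulVec_smul, add_dotProduct, dotProduct_add, smul_dotProduct,
        dotProduct_smul, smul_eq_mul, hsymm x hx, dotProduct_comm hx (Q.mulVec x)]
      ring
    have eA : e ⬝ᵥ A.mulVec hx = (A.mulVec x - b) ⬝ᵥ A.mulVec hx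
        + δy * (θy ⬝ᵥ A.mulVec hx - y ⬝ᵥ A.mulVec hx) := by
      rw [he, add_dotProduct, smul_dotProduct, sub_dotProduct θy, smul_eq_mul]
    have fG : f ⬝ᵥ (G.mulVec hx + k) = (G.mulVec x - d + s) ⬝ᵥ (G.mulVec hx + k)
        + δz * (θz ⬝ᵥ (G.mulVec hx + k) - z ⬝ᵥ (G.mulVec hx + k)) := by
      rw [hf, add_dotProduct, smul_dotProduct, sub_dotProduct θz, smul_eq_mul]
    have zG : z ⬝ᵥ (G.mulVec hx + k) = z ⬝ᵥ G.mulVec hx + z ⬝ᵥ k := dotProduct_add _ _ _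
    have tA : Aᵀ.mulVec y ⬝ᵥ hx = y ⬝ᵥ A.mulVec hx := by
      rw [mulVec_transpose, dotProduct_mulVec]
    have tG : Gᵀ.mulVec z ⬝ᵥ hx = z ⬝ᵥ G.mulVec hx := by
      rw [mulVec_transpose, dotProduct_mulVec]
    have eF : F ⬝ᵥ hx = Q.mulVec x ⬝ᵥ hx + q ⬝ᵥ hx + y ⬝ᵥ A.mulVec hx + z ⬝ᵥ G.mulVec hx
        + δx * ((x - θx) ⬝ᵥ hx) := by
      rw [hF]
      simp only [add_dotProduct, smul_dotProduct, smul_eq_mul, tA, tG]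
    have eD : e ⬝ᵥ (A.mulVec hx - δy • hy) = e ⬝ᵥ A.mulVec hx - δy * (e ⬝ᵥ hy) := by
      rw [dotProduct_sub, dotProduct_smul, smul_eq_mul]
    have fD : f ⬝ᵥ (G.mulVec hx + k - δz • hz) = f ⬝ᵥ (G.mulVec hx + k) - δz * (f ⬝ᵥ hz) := by
      rw [dotProduct_sub, dotProduct_smul, smul_eq_mul]
    have lA : θy ⬝ᵥ ((A.mulVec x - b) + t • A.mulVec hx)
        = θy ⬝ᵥ (A.mulVec x - b) + t * (θy ⬝ᵥ A.mulVec hx) := by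
      rw [dotProduct_add, dotProduct_smul, smul_eq_mul]
    have lG : θz ⬝ᵥ ((G.mulVec x - d + s) + t • (G.mulVec hx + k))
        = θz ⬝ᵥ (G.mulVec x - d + s) + t * (θz ⬝ᵥ (G.mulVec hx + k)) := by
      rw [dotProduct_add, dotProduct_smul, smul_eq_mul]
    have lq : q ⬝ᵥ (x + t • hx) = q ⬝ᵥ x + t * (q ⬝ᵥ hx) := by
      rw [dotProduct_add, dotProduct_smul, smul_eq_mul]
    rw [hM, hM, hL, hL, r1, r2, r3, r4, r5, r6, lA, lG, lq]
    simp only [dot_add_smul_self, eD, fD, quad, ← he, ← hf]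
    rw [eF, eA, fG, zG]
    generalize ∑ i, Real.log ((s + t • k) i) = S1
    field_simp
    ring
  constructor
  · intro hmin
    have hlin : ∀ (hx : Fin n → ℝ) (hy : Fin m → ℝ) (hz : Fin p → ℝ),
        F ⬝ᵥ hx + 2 / δy * (e ⬝ᵥ A.mulVec hx) + 2 / δz * (f ⬝ᵥ G.mulVec hx)
          - e ⬝ᵥ hy - f ⬝ᵥ hz = 0 := by
      intro hx hy hz
      apply linear_coeff_eq_zero (k := quad hx 0 hy hz)
      intro t
      have h1 := hmin (x + t • hx) (s + t • (0 : Fin p → ℝ)) (y + t • hy) (z + t • hz)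
        (by simpa using hs)
      rw [key] at h1
      simp only [smul_zero, add_zero, dotProduct_zero, sub_self, mul_zero, sub_zero] at h1
      linarith
    have e0 : e = 0 := by
      have := hlin 0 e 0
      simp only [mulVec_zero, dotProduct_zero] at this
      exact dotProduct_self_eq_zero.mp (by linarith)
    have f0 : f = 0 := by
      have := hlin 0 0 f
      simp only [mulVec_zero, dotProduct_zero] at this
      exact dotProduct_self_eq_zero.mp (by linarith)
    have F0 : F = 0 := by
      have := hlin F 0 0
      simp only [e0, f0, zero_dotProduct] at this
      exact dotProduct_self_eq_zero.mp (by linarith)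
    refine ⟨F0, fun i => ?_, e0, f0⟩
    apply barrier_first_order (κ := quad 0 (Pi.single i 1) 0 0) (hs i)
    intro t ht
    have hpos : ∀ j, 0 < (s + t • (Pi.single i 1 : Fin p → ℝ)) j := by
      intro j
      by_cases hj : j = i
      · subst hj; simpa using ht
      · simpa [hj] using hs j
    have h1 := hmin (x + t • 0) (s + t • Pi.single i 1) (y + t • 0) (z + t • 0) hpos
    rw [key] at h1
    have hsum : ∑ j, Real.log ((s + t • (Pi.single i 1 : Fin p → ℝ)) j) - ∑ j, Real.log (s j)
        = Real.log (s i + t) - Real.log (s i) := by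
      rw [← Finset.sum_sub_distrib, Finset.sum_eq_single i]
      · simp
      · intro j _ hj; simp [hj]
      · simp
    rw [hsum, e0, f0, F0] at h1
    simp only [zero_dotProduct, dotProduct_single, mul_one, mul_zero, add_zero, zero_add,
      sub_zero] at h1
    linarith
  · rintro ⟨F0, hsz, e0, f0⟩ x' s' y' z' hs'
    have h1 := key 1 (x' - x) (s' - s) (y' - y) (z' - z)
    simp only [one_smul, add_sub_cancel] at h1
    rw [h1, F0, e0, f0]
    have h2 := hquad (x' - x) (s' - s) (y' - y) (z' - z)
    have h3 : ν * (∑ i, Real.log (s' i) - ∑ i, Real.log (s i)) ≤ z ⬝ᵥ (s' - s) := by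
      rw [← Finset.sum_sub_distrib, Finset.mul_sum]
      refine Finset.sum_le_sum fun i _ => ?_
      have h4 := Real.log_le_sub_one_of_pos (div_pos (hs' i) (hs i))
      rw [Real.log_div (hs' i).ne' (hs i).ne'] at h4
      have h5 := mul_le_mul_of_nonneg_left h4 hν.le
      have h6 : ν * (s' i / s i - 1) = z i * (s' - s) i := by
        have := (hs i).ne'
        rw [← hsz i, Pi.sub_apply]
        field_simp
      linarith
    simp only [zero_dotProduct]
    linarith
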